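/- Let r,s ∈ (4/3,∞] and ν₀ > 0. If 5/(3r) + 2/s < 1, then the set of data u₀ ∈ L²_σ for which there exist T > 0 and a weak solution u ∈ W_{ν₀}(u₀) with ‖u‖_{L^r(0,T;L^s)} < ∞ is meagre in L²_σ. -/

import Mathlib

open MeasureTheory ENNReal Set Filter

noncomputable section

abbrev E3 : Type := EuclideanSpace ℝ (Fin 3)

/-- Spatial partial derivative of a scalar function in the `j`-th coordinate direction. -/
def pd (f : E3 → ℝ) (j : Fin 3) (x : E3) : ℝ :=
  fderiv ℝ f x (EuclideanSpace.single j 1)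

/-- Divergence-free in the sense of distributions. -/
def IsDivFree (v : E3 → E3) : Prop :=
  ∀ φ : E3 → ℝ, ContDiff ℝ (⊤ : ℕ∞) φ → HasCompactSupport φ →
    ∫ x : E3, ∑ i, v x i * pd φ i x = 0

/-- The space-time measure on `(0,∞) × ℝ³`. -/
def μST : Measure (ℝ × E3) := (volume.restrict (Ioi (0:ℝ))).prod volume

/-- Mixed norm `L^r(I; L^s)`. -/
def mixedNorm (r s : ℝ≥0∞) (I : Set ℝ) (u : ℝ → E3 → E3) : ℝ≥0∞ :=
  if r = ∞ then essSup (fun t => eLpNorm (u t) s volume) (volume.restrict I)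
  else (∫⁻ t in I, (eLpNorm (u t) s volume) ^ r.toReal) ^ (1 / r.toReal)

/-- Squared spatial `L²` norm of the (matrix-valued) gradient at time `t`. -/
def gradSq (G : ℝ → E3 → Fin 3 → Fin 3 → ℝ) (t : ℝ) : ℝ≥0∞ :=
  ∫⁻ x : E3, ∑ i, ∑ j, ENNReal.ofReal ((G t x i j) ^ 2)

/-- `L²((0,∞); L²)` norm of the gradient. -/
def gradL2 (G : ℝ → E3 → Fin 3 → Fin 3 → ℝ) : ℝ≥0∞ :=
  (∫⁻ t in Ioi (0:ℝ), gradSq G t) ^ (1/2 : ℝ)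

/-- `G` is the distributional spatial gradient of `u` on `ℝ³ × (0,∞)`. -/
def IsDistGrad (u : ℝ → E3 → E3) (G : ℝ → E3 → Fin 3 → Fin 3 → ℝ) : Prop :=
  ∀ ψ : ℝ × E3 → ℝ, ContDiff ℝ (⊤ : ℕ∞) ψ → HasCompactSupport ψ →
    tsupport ψ ⊆ {p | 0 < p.1} → ∀ i j,
    (∫ p, u p.1 p.2 i * pd (fun y => ψ (p.1, y)) j p.2 ∂μST)
      = - ∫ p, G p.1 p.2 i j * ψ p ∂μST

/-- Admissible space-time test function: smooth, compactly supported in `ℝ³ × [0,∞)`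
and divergence-free. -/
def IsTest (φ : ℝ × E3 → E3) : Prop :=
  ContDiff ℝ (⊤ : ℕ∞) φ ∧ HasCompactSupport φ ∧
    ∀ p : ℝ × E3, ∑ i, pd (fun y => φ (p.1, y) i) i p.2 = 0

def timeDeriv (φ : ℝ × E3 → E3) (p : ℝ × E3) (i : Fin 3) : ℝ :=
  deriv (fun τ => φ (τ, p.2) i) p.1

def spaceLap (φ : ℝ × E3 → E3) (p : ℝ × E3) (i : Fin 3) : ℝ :=
  ∑ j, pd (fun y => pd (fun z => φ (p.1, z) i) j y) j p.2

def spaceGrad (φ : ℝ × E3 → E3) (p : ℝ × E3) (i j : Fin 3) : ℝ :=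
  pd (fun y => φ (p.1, y) i) j p.2

/-- Weak solution of the Navier–Stokes equations on `ℝ³ × (0,∞)` with viscosity `ν`,
datum `u₀` and distributional spatial gradient `G`. -/
def IsWeakNS (ν : ℝ) (u₀ : E3 → E3) (u : ℝ → E3 → E3)
    (G : ℝ → E3 → Fin 3 → Fin 3 → ℝ) : Prop :=
  AEStronglyMeasurable (Function.uncurry u) μST ∧
  mixedNorm ∞ 2 (Ioi 0) u < ∞ ∧
  (∀ᵐ t ∂(volume.restrict (Ioi (0:ℝ))), IsDivFree (u t)) ∧
  AEStronglyMeasurable (Function.uncurry G) μST ∧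
  (∫⁻ t in Ioi (0:ℝ), gradSq G t) < ∞ ∧
  IsDistGrad u G ∧
  ∀ φ : ℝ × E3 → E3, IsTest φ →
    (∫ p,
        ((∑ i, u p.1 p.2 i * (timeDeriv φ p i + ν * spaceLap φ p i)) +
         ∑ i, ∑ j, u p.1 p.2 i * u p.1 p.2 j * spaceGrad φ p i j) ∂μST)
      = - ∫ x : E3, ∑ i, u₀ x i * φ (0, x) i

/-- Leray–Hopf solution: weak solution satisfying the energy inequality. -/
def IsLerayHopf (ν : ℝ) (u₀ : E3 → E3) (u : ℝ → E3 → E3)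
    (G : ℝ → E3 → Fin 3 → Fin 3 → ℝ) : Prop :=
  IsWeakNS ν u₀ u G ∧
  ∀ᵐ t ∂(volume.restrict (Ioi (0:ℝ))),
    ENNReal.ofReal (1/2) * (eLpNorm (u t) 2 volume) ^ (2:ℕ)
        + ENNReal.ofReal ν * ∫⁻ τ in Ioc (0:ℝ) t, gradSq G τ
      ≤ ENNReal.ofReal (1/2) * (eLpNorm u₀ 2 volume) ^ (2:ℕ)

/-- `L²_σ`: divergence-free fields in `L²(ℝ³;ℝ³)`, as a subset of `L²`. -/
def L2σ : Set (Lp E3 2 (volume : Measure E3)) := {v | IsDivFree ⇑v}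

lemma contDiff_pd {f : E3 → ℝ} (hf : ContDiff ℝ (⊤ : ℕ∞) f) (j : Fin 3) :
    ContDiff ℝ (⊤ : ℕ∞) (pd f j) :=
  (hf.fderiv_right (m := (⊤ : ℕ∞)) (by simp)).clm_apply contDiff_const

lemma tsupport_pd_subset (f : E3 → ℝ) (j : Fin 3) : tsupport (pd f j) ⊆ tsupport f :=
  tsupport_fderiv_apply_subset ℝ _

lemma pd_comp_smul (f : E3 → ℝ) (c : ℝ) (j : Fin 3) (x : E3) :
    pd (fun y => f (c • y)) j x = c * pd f j (c • x) := by
  have := fderiv_comp_smul (𝕜 := ℝ) (f := f) c (x := x)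
  simp [pd, this]

lemma pd_const_mul (f : E3 → ℝ) (a : ℝ) (j : Fin 3) (x : E3) :
    pd (fun y => a * f y) j x = a * pd f j x := by
  have := congrFun (fderiv_const_smul_field (𝕜 := ℝ) (f := f) a) x
  simp only [pd]
  change (fderiv ℝ (a • f) x) _ = _
  simp [this]

lemma exists_divFree_profile : ∃ ψ : E3 → E3, ContDiff ℝ (⊤ : ℕ∞) ψ ∧ HasCompactSupport ψ ∧
    tsupport ψ ⊆ Metric.ball 0 1 ∧ (∀ x, ∑ i, pd (fun y => ψ y i) i x = 0) ∧ ψ ≠ 0 := by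
  let η : ContDiffBump (0 : ℝ) := ⟨1/4, 1/2, by norm_num, by norm_num⟩
  let A : E3 → E3 := fun x => !₂[x 1, - x 0, 0]
  let ψ : E3 → E3 := fun x => η (‖x‖ ^ 2) • A x
  have hη : ContDiff ℝ (⊤ : ℕ∞) η := η.contDiff
  have hψ : ContDiff ℝ (⊤ : ℕ∞) ψ := by
    rw [contDiff_euclidean]
    intro i
    have h1 : ContDiff ℝ (⊤ : ℕ∞) fun x : E3 => η (‖x‖ ^ 2) := hη.comp (contDiff_norm_sq ℝ)
    fin_cases i
    · simpa [ψ, A] using h1.mul (contDiff_euclidean.1 contDiff_id 1)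
    · simpa [ψ, A] using (h1.mul (contDiff_euclidean.1 contDiff_id 0)).neg
    · simpa [ψ, A] using contDiff_const
  have hts : tsupport ψ ⊆ {x | ‖x‖ ^ 2 ≤ 1 / 2} := by
    refine closure_minimal (fun x hx => ?_) (isClosed_le (by fun_prop) (by fun_prop))
    by_contra hc
    simp only [mem_ofPred_eq, not_le] at hc
    apply hx
    have : η (‖x‖ ^ 2) = 0 := by
      apply η.zero_of_le_dist
      simp only [dist_zero_right, Real.norm_eq_abs, abs_of_nonneg (sq_nonneg ‖x‖)]
      exact hc.le
    simp [ψ, this]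
  have hts' : tsupport ψ ⊆ Metric.ball 0 1 := fun x hx => by
    have := hts hx
    simp only [mem_ofPred_eq] at this
    rw [mem_ball_zero_iff]
    nlinarith [norm_nonneg x]
  refine ⟨ψ, hψ, ?_, hts', ?_, ?_⟩
  · exact HasCompactSupport.of_support_subset_isCompact (isCompact_closedBall (0 : E3) 1)
      ((subset_tsupport ψ).trans (hts'.trans Metric.ball_subset_closedBall))
  · intro x
    have hd (L : E3 → ℝ) (L' : E3 →L[ℝ] ℝ) (hL : ∀ y, L y = L' y) (i : Fin 3) :
        pd (fun y => η (‖y‖ ^ 2) * L y) i x =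
          η (‖x‖ ^ 2) * L' (EuclideanSpace.single i 1) + L x * (deriv η (‖x‖ ^ 2) * (2 * x i)) := by
      have e1 : HasFDerivAt (fun y : E3 => ‖y‖ ^ 2) (2 • innerSL ℝ x) x :=
        (hasStrictFDerivAt_norm_sq x).hasFDerivAt
      have e2 := ((hη.differentiable (by simp)) (‖x‖ ^ 2)).hasDerivAt.comp_hasFDerivAt x e1
      have e3 : HasFDerivAt L L' x := by
        rw [show L = L' from funext hL]; exact L'.hasFDerivAt
      have e4 := e2.mul e3
      rw [pd, show (fun y => η (‖y‖ ^ 2) * L y) = ((η ∘ fun y : E3 => ‖y‖ ^ 2) * L) from rfl,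
        e4.fderiv]
      simp [EuclideanSpace.inner_single_right]
    rw [Fin.sum_univ_three]
    have h0 := hd (fun y => y 1) (EuclideanSpace.proj 1) (fun _ => rfl) 0
    have h1 := hd (fun y => - y 0) (-EuclideanSpace.proj 0) (fun _ => rfl) 1
    have h2 := hd (fun y => 0) 0 (fun _ => rfl) 2
    simp only [ψ, A]
    simp at h0 h1 h2 ⊢
    rw [h0, h1, h2]
    ring
  · intro h0
    have := congrFun h0 (EuclideanSpace.single 1 (1/4))
    have h1 : η (‖(EuclideanSpace.single 1 (1/4) : E3)‖ ^ 2) = 1 := by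
      apply η.one_of_mem_closedBall
      simp [η]
      norm_num
    have := congrArg (fun v : E3 => v 0) this
    simp only [ψ, h1, A] at this
    simp at this

lemma exists_bound_of_tsupport_subset_ball {f : E3 → ℝ} (hf : Continuous f)
    (hs : tsupport f ⊆ Metric.ball 0 1) : ∃ C, ∀ x, |f x| ≤ C :=
  (HasCompactSupport.of_support_subset_isCompact (isCompact_closedBall (0 : E3) 1)
      ((subset_tsupport f).trans (hs.trans Metric.ball_subset_closedBall))
      ).exists_bound_of_continuous hf

lemma exists_scaled_tests : ∃ ψ : E3 → E3, ContDiff ℝ (⊤ : ℕ∞) ψ ∧ HasCompactSupport ψ ∧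
    (∀ x, ∑ i, pd (fun y => ψ y i) i x = 0) ∧ ψ ≠ 0 ∧ ∃ C : ℝ, 0 ≤ C ∧
    ∀ c d : ℝ, 1 ≤ c → c ^ 2 ≤ d → ∃ φ : ℝ × E3 → E3, IsTest φ ∧ (∀ x, φ (0, x) = ψ (c • x)) ∧
      (∀ p i, |timeDeriv φ p i| ≤ C * d) ∧ (∀ p i, |spaceLap φ p i| ≤ C * d) ∧
      (∀ p i j, |spaceGrad φ p i j| ≤ C * c) ∧
      ∀ p : ℝ × E3, 0 < p.1 → p ∉ Ioo 0 d⁻¹ ×ˢ Metric.ball (0 : E3) c⁻¹ →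
        (∀ i, timeDeriv φ p i = 0) ∧ (∀ i, spaceLap φ p i = 0) ∧ ∀ i j, spaceGrad φ p i j = 0 := by
  obtain ⟨ψ, hψ, hψc, hψs, hψd, hψ0⟩ := exists_divFree_profile
  refine ⟨ψ, hψ, hψc, hψd, hψ0, ?_⟩
  let χ : ContDiffBump (0 : ℝ) := ⟨1/4, 1/2, by norm_num, by norm_num⟩
  have hχ : ContDiff ℝ (⊤ : ℕ∞) χ := χ.contDiff
  have hχ0 : χ 0 = 1 := χ.one_of_mem_closedBall (by simp [χ])
  have hχs : tsupport χ ⊆ Metric.ball 0 1 := by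
    rw [χ.tsupport_eq]
    exact Metric.closedBall_subset_ball (by norm_num [χ])
  have hχ1 : ∀ t, |χ t| ≤ 1 := fun t => by
    rw [abs_of_nonneg χ.nonneg]; exact χ.le_one
  obtain ⟨C₀, hC₀⟩ := χ.hasCompactSupport.deriv.exists_bound_of_continuous
    (hχ.continuous_deriv (by simp))
  have hψi (i : Fin 3) : ContDiff ℝ (⊤ : ℕ∞) fun y => ψ y i := contDiff_euclidean.1 hψ i
  have hsi (i : Fin 3) : tsupport (fun y => ψ y i) ⊆ Metric.ball 0 1 :=
    (tsupport_comp_subset (g := fun v : E3 => v i) rfl ψ).trans hψs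
  have hsij (i j : Fin 3) : tsupport (pd (fun y => ψ y i) j) ⊆ Metric.ball 0 1 :=
    (tsupport_pd_subset _ _).trans (hsi i)
  have hsijj (i j : Fin 3) : tsupport (pd (pd (fun y => ψ y i) j) j) ⊆ Metric.ball 0 1 :=
    (tsupport_pd_subset _ _).trans (hsij i j)
  choose C₁ hC₁ using fun i => exists_bound_of_tsupport_subset_ball (hψi i).continuous (hsi i)
  choose C₂ hC₂ using fun i j => exists_bound_of_tsupport_subset_ball
    (contDiff_pd (hψi i) j).continuous (hsij i j)
  choose C₃ hC₃ using fun i j => exists_bound_of_tsupport_subset_ball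
    (contDiff_pd (contDiff_pd (hψi i) j) j).continuous (hsijj i j)
  have p₀ : 0 ≤ C₀ := (norm_nonneg _).trans (hC₀ 0)
  have p₁ i : 0 ≤ C₁ i := (abs_nonneg _).trans (hC₁ i 0)
  have p₂ i j : 0 ≤ C₂ i j := (abs_nonneg _).trans (hC₂ i j 0)
  have p₃ i j : 0 ≤ C₃ i j := (abs_nonneg _).trans (hC₃ i j 0)
  have s₁ : 0 ≤ ∑ i, C₀ * C₁ i := Finset.sum_nonneg fun i _ => mul_nonneg p₀ (p₁ i)
  have s₂ : 0 ≤ ∑ i, ∑ j, C₂ i j := Finset.sum_nonneg fun i _ => Finset.sum_nonneg fun j _ => p₂ i j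
  have s₃ : 0 ≤ ∑ i, ∑ j, C₃ i j := Finset.sum_nonneg fun i _ => Finset.sum_nonneg fun j _ => p₃ i j
  refine ⟨(∑ i, C₀ * C₁ i) + (∑ i, ∑ j, C₂ i j) + ∑ i, ∑ j, C₃ i j, by positivity, ?_⟩
  intro c d hc hd
  have hc0 : 0 < c := by linarith
  have hd0 : 0 < d := by nlinarith
  let φ : ℝ × E3 → E3 := fun p => χ (d * p.1) • ψ (c • p.2)
  have hφt (p : ℝ × E3) (i : Fin 3) :
      timeDeriv φ p i = d * deriv χ (d * p.1) * ψ (c • p.2) i := by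
    have h1 : HasDerivAt (fun τ : ℝ => χ (d * τ)) (deriv χ (d * p.1) * d) p.1 :=
      HasDerivAt.comp (h₂ := χ) p.1 ((hχ.differentiable (by simp)) _).hasDerivAt
        (by simpa using (hasDerivAt_id p.1).const_mul d)
    have h2 := (h1.mul_const (ψ (c • p.2) i)).deriv
    simp only [timeDeriv, φ, PiLp.smul_apply, smul_eq_mul]
    rw [h2]; ring
  have hφg (p : ℝ × E3) (i j : Fin 3) :
      spaceGrad φ p i j = χ (d * p.1) * (c * pd (fun y => ψ y i) j (c • p.2)) := by
    simp only [spaceGrad, φ, PiLp.smul_apply, smul_eq_mul]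
    rw [pd_const_mul (fun y => ψ (c • y) i), pd_comp_smul (fun y => ψ y i)]
  have hφl (p : ℝ × E3) (i : Fin 3) :
      spaceLap φ p i = χ (d * p.1) * c ^ 2 *
        ∑ j, pd (pd (fun y => ψ y i) j) j (c • p.2) := by
    simp only [spaceLap]
    rw [Finset.mul_sum]
    refine Finset.sum_congr rfl fun j _ => ?_
    have : (fun y => pd (fun z => φ (p.1, z) i) j y) =
        fun y => χ (d * p.1) * (c * pd (fun y => ψ y i) j (c • y)) :=
      funext fun y => hφg (p.1, y) i j
    rw [this, pd_const_mul (fun y => c * pd (fun y => ψ y i) j (c • y)),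
      pd_const_mul (fun y => pd (fun y => ψ y i) j (c • y)), pd_comp_smul (pd (fun y => ψ y i) j)]
    ring
  have hK : HasCompactSupport φ := by
    refine HasCompactSupport.of_support_subset_isCompact
      ((isCompact_closedBall (0 : ℝ) d⁻¹).prod (isCompact_closedBall (0 : E3) c⁻¹)) ?_
    intro p hp
    have h1 : χ (d * p.1) ≠ 0 := fun h => hp (by simp [φ, h])
    have h2 : ψ (c • p.2) ≠ 0 := fun h => hp (by simp [φ, h])
    have h1 := hχs (subset_tsupport _ h1)
    have h2 := hψs (subset_tsupport _ h2)
    rw [mem_ball_zero_iff] at h1 h2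
    rw [norm_mul, Real.norm_of_nonneg hd0.le] at h1
    rw [norm_smul, Real.norm_of_nonneg hc0.le] at h2
    simp only [mem_prod, mem_closedBall_zero_iff]
    exact ⟨by rw [← one_div, le_div_iff₀ hd0]; linarith, by rw [← one_div, le_div_iff₀ hc0]; linarith⟩
  refine ⟨φ, ⟨?_, hK, ?_⟩, ?_, ?_, ?_, ?_, ?_⟩
  · exact (hχ.comp (contDiff_const.mul contDiff_fst)).smul
      (hψ.comp (contDiff_snd.const_smul c))
  · intro p
    have := hφg p
    simp only [spaceGrad] at this
    simp only [this, ← Finset.mul_sum, hψd, mul_zero]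
  · intro x; simp [φ, hχ0]
  · intro p i
    rw [hφt, abs_mul, abs_mul, abs_of_pos hd0]
    have a1 : C₀ * C₁ i ≤ ∑ i, C₀ * C₁ i :=
      Finset.single_le_sum (f := fun i => C₀ * C₁ i) (fun i _ => mul_nonneg p₀ (p₁ i)) (Finset.mem_univ i)
    have a2 : |deriv χ (d * p.1)| * |ψ (c • p.2) i| ≤ C₀ * C₁ i :=
      mul_le_mul (hC₀ _) (hC₁ i _) (abs_nonneg _) p₀
    rw [mul_assoc, mul_comm]
    exact mul_le_mul_of_nonneg_right (by linarith) hd0.le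
  · intro p i
    rw [hφl, abs_mul, abs_mul, abs_of_nonneg (sq_nonneg c)]
    have a1 : |∑ j, pd (pd (fun y => ψ y i) j) j (c • p.2)| ≤ ∑ j, C₃ i j :=
      (Finset.abs_sum_le_sum_abs _ _).trans (Finset.sum_le_sum fun j _ => hC₃ i j _)
    have a2 : ∑ j, C₃ i j ≤ ∑ i, ∑ j, C₃ i j :=
      Finset.single_le_sum (f := fun i => ∑ j, C₃ i j)
        (fun i _ => Finset.sum_nonneg fun j _ => p₃ i j) (Finset.mem_univ i)
    have a3 : |χ (d * p.1)| * c ^ 2 ≤ d :=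
      (mul_le_of_le_one_left (sq_nonneg c) (hχ1 _)).trans hd
    rw [mul_comm]
    exact mul_le_mul (by linarith) a3 (by positivity) (by positivity)
  · intro p i j
    rw [hφg, abs_mul, abs_mul, abs_of_pos hc0]
    have a1 : C₂ i j ≤ ∑ j, C₂ i j :=
      Finset.single_le_sum (f := fun j => C₂ i j) (fun j _ => p₂ i j) (Finset.mem_univ j)
    have a2 : ∑ j, C₂ i j ≤ ∑ i, ∑ j, C₂ i j :=
      Finset.single_le_sum (f := fun i => ∑ j, C₂ i j)
        (fun i _ => Finset.sum_nonneg fun j _ => p₂ i j) (Finset.mem_univ i)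
    refine (mul_le_of_le_one_left (by positivity) (hχ1 _)).trans ?_
    rw [mul_comm]
    exact mul_le_mul_of_nonneg_right (by linarith [hC₂ i j (c • p.2)]) hc0.le
  · intro p hp hpn
    have key : (χ (d * p.1) = 0 ∧ deriv χ (d * p.1) = 0) ∨ (c • p.2 ∉ Metric.ball (0 : E3) 1) := by
      by_contra! hcon
      apply hpn
      have hx := hcon.2
      rw [mem_ball_zero_iff, norm_smul, Real.norm_of_nonneg hc0.le] at hx
      refine ⟨⟨hp, ?_⟩, ?_⟩
      · by_contra! hge
        have hnot : d * p.1 ∉ tsupport χ := fun hmem => by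
          have := hχs hmem
          rw [mem_ball_zero_iff, norm_mul, Real.norm_of_nonneg hd0.le, Real.norm_of_nonneg hp.le]
            at this
          rw [inv_le_iff_one_le_mul₀' hd0] at hge
          linarith
        exact hcon.1 (image_eq_zero_of_notMem_tsupport hnot)
          (image_eq_zero_of_notMem_tsupport fun h => hnot (tsupport_deriv_subset h))
      · rw [mem_ball_zero_iff, ← one_div, lt_div_iff₀ hc0]
        linarith
    rcases key with ⟨k1, k2⟩ | k
    · exact ⟨fun i => by rw [hφt, k2]; simp, fun i => by rw [hφl, k1]; simp,
        fun i j => by rw [hφg, k1]; simp⟩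
    · refine ⟨fun i => ?_, fun i => ?_, fun i j => ?_⟩
      · rw [hφt, image_eq_zero_of_notMem_tsupport (f := fun y => ψ y i) fun h => k (hsi i h), mul_zero]
      · rw [hφl, Finset.sum_eq_zero, mul_zero]
        exact fun j _ => image_eq_zero_of_notMem_tsupport fun h => k (hsijj i j h)
      · rw [hφg, image_eq_zero_of_notMem_tsupport fun h => k (hsij i j h)]; simp

lemma mixedNorm_eq_eLpNorm {r s : ℝ≥0∞} (hr : r ≠ 0) (I : Set ℝ) (u : ℝ → E3 → E3) :
    mixedNorm r s I u = eLpNorm (fun t => eLpNorm (u t) s volume) r (volume.restrict I) := by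
  by_cases h : r = ∞
  · simp [mixedNorm, h, eLpNorm, eLpNormEssSup]
  · simp [mixedNorm, h, hr, eLpNorm, eLpNorm']

lemma μST_restrict_prod (τ : ℝ) (B : Set E3) :
    μST.restrict (Ioo 0 τ ×ˢ B) = (volume.restrict (Ioo 0 τ)).prod (volume.restrict B) := by
  rw [μST, ← Measure.prod_restrict, Measure.restrict_restrict measurableSet_Ioo,
    inter_eq_left.2 Ioo_subset_Ioi_self]

lemma lintegral_enorm_le_mixedNorm {r s : ℝ≥0∞} (hr : 1 ≤ r) (hs : 1 ≤ s) {u : ℝ → E3 → E3}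
    (hu : AEStronglyMeasurable (Function.uncurry u) μST) {τ T : ℝ} (hτ : τ ≤ T)
    {B : Set E3} (hB : volume B ≠ ∞) :
    ∫⁻ p in Ioo 0 τ ×ˢ B, ‖u p.1 p.2‖ₑ ∂μST ≤
      mixedNorm r s (Ioo 0 T) u * volume B ^ (1 - 1 / s.toReal) *
        ENNReal.ofReal τ ^ (1 - 1 / r.toReal) := by
  have hr0 : r ≠ 0 := (zero_lt_one.trans_le hr).ne'
  have hu' : AEStronglyMeasurable (Function.uncurry u)
      ((volume.restrict (Ioo 0 τ)).prod (volume.restrict B)) := by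
    rw [← μST_restrict_prod]; exact hu.restrict
  have hf : AEMeasurable (fun t => ∫⁻ x in B, ‖u t x‖ₑ) (volume.restrict (Ioo 0 τ)) :=
    hu'.enorm.lintegral_prod_right'
  have hV : volume B ^ (1 - 1 / s.toReal) ≠ ∞ := by
    refine ENNReal.rpow_ne_top_of_nonneg ?_ hB
    by_cases hst : s = ∞
    · simp [hst]
    · rw [sub_nonneg, div_le_one (ENNReal.toReal_pos (zero_lt_one.trans_le hs).ne' hst)]
      simpa using (ENNReal.toReal_le_toReal (by simp) hst).2 hs
  have hle : ∀ᵐ t ∂(volume.restrict (Ioo 0 τ)), ‖∫⁻ x in B, ‖u t x‖ₑ‖ₑ ≤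
      (volume B ^ (1 - 1 / s.toReal)).toNNReal * ‖eLpNorm (u t) s volume‖ₑ := by
    filter_upwards [hu'.prodMk_left] with t ht
    rw [ENNReal.coe_toNNReal hV, enorm_eq_self, enorm_eq_self, ← eLpNorm_one_eq_lintegral_enorm]
    refine (eLpNorm_le_eLpNorm_mul_rpow_measure_univ hs ht).trans ?_
    rw [Measure.restrict_apply_univ, mul_comm, ENNReal.toReal_one, div_one]
    gcongr
    exact eLpNorm_mono_measure _ Measure.restrict_le_self
  rw [μST_restrict_prod, lintegral_prod (fun p : ℝ × E3 => ‖u p.1 p.2‖ₑ) hu'.enorm]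
  calc ∫⁻ t in Ioo 0 τ, ∫⁻ x in B, ‖u t x‖ₑ
      = eLpNorm (fun t => ∫⁻ x in B, ‖u t x‖ₑ) 1 (volume.restrict (Ioo 0 τ)) := by
        simp [eLpNorm_one_eq_lintegral_enorm]
    _ ≤ eLpNorm (fun t => ∫⁻ x in B, ‖u t x‖ₑ) r (volume.restrict (Ioo 0 τ)) *
          ENNReal.ofReal τ ^ (1 - 1 / r.toReal) := by
        refine (eLpNorm_le_eLpNorm_mul_rpow_measure_univ hr hf.aestronglyMeasurable).trans ?_
        simp
    _ ≤ _ := by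
        gcongr
        refine (eLpNorm_le_nnreal_smul_eLpNorm_of_ae_le_mul' hle r).trans ?_
        rw [ENNReal.smul_def, ENNReal.coe_toNNReal hV, smul_eq_mul, mul_comm,
          mixedNorm_eq_eLpNorm hr0]
        gcongr

lemma lintegral_enorm_sq_le_mixedNorm {u : ℝ → E3 → E3}
    (hu : AEStronglyMeasurable (Function.uncurry u) μST) (τ : ℝ) (B : Set E3) :
    ∫⁻ p in Ioo 0 τ ×ˢ B, ‖u p.1 p.2‖ₑ ^ 2 ∂μST ≤
      mixedNorm ∞ 2 (Ioi 0) u ^ 2 * ENNReal.ofReal τ := by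
  have hu' : AEStronglyMeasurable (Function.uncurry u)
      ((volume.restrict (Ioo 0 τ)).prod (volume.restrict B)) := by
    rw [← μST_restrict_prod]; exact hu.restrict
  have hM : ∀ᵐ t ∂(volume.restrict (Ioo 0 τ)), eLpNorm (u t) 2 volume ≤
      mixedNorm ∞ 2 (Ioi 0) u := by
    simp only [mixedNorm, if_true]
    exact ae_mono (Measure.restrict_mono Ioo_subset_Ioi_self le_rfl) (ENNReal.ae_le_essSup _)
  rw [μST_restrict_prod, lintegral_prod (fun p : ℝ × E3 => ‖u p.1 p.2‖ₑ ^ 2) (hu'.enorm.pow_const 2)]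
  calc ∫⁻ t in Ioo 0 τ, ∫⁻ x in B, ‖u t x‖ₑ ^ 2
      ≤ ∫⁻ t in Ioo 0 τ, mixedNorm ∞ 2 (Ioi 0) u ^ 2 := by
        refine lintegral_mono_ae ?_
        filter_upwards [hM] with t ht
        refine le_trans ?_ (pow_le_pow_left₀ (by simp) ht 2)
        have := eLpNorm_nnreal_pow_eq_lintegral (f := u t) (μ := volume) (p := 2) (by simp)
        simp at this
        rw [this]
        exact setLIntegral_le_lintegral _ _
    _ = _ := by simp

lemma enorm_pairing_le {ν : ℝ} (hν : 0 < ν) {u₀ : E3 → E3} {u : ℝ → E3 → E3}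
    {G : ℝ → E3 → Fin 3 → Fin 3 → ℝ} (hu : IsWeakNS ν u₀ u G) {φ : ℝ × E3 → E3} (hφ : IsTest φ)
    {a b : ℝ} (ha0 : 0 ≤ a) (hb0 : 0 ≤ b) (ht : ∀ p i, |timeDeriv φ p i| ≤ a)
    (hl : ∀ p i, |spaceLap φ p i| ≤ a) (hg : ∀ p i j, |spaceGrad φ p i j| ≤ b)
    {S : Set (ℝ × E3)} (hS : MeasurableSet S)
    (hφS : ∀ p : ℝ × E3, 0 < p.1 → p ∉ S →
      (∀ i, timeDeriv φ p i = 0) ∧ (∀ i, spaceLap φ p i = 0) ∧ ∀ i j, spaceGrad φ p i j = 0) :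
    ‖∫ x : E3, ∑ i, u₀ x i * φ (0, x) i‖ₑ ≤
      ENNReal.ofReal (3 * (a * (1 + ν))) * ∫⁻ p in S, ‖u p.1 p.2‖ₑ ∂μST +
      ENNReal.ofReal (9 * b) * ∫⁻ p in S, ‖u p.1 p.2‖ₑ ^ 2 ∂μST := by
  obtain ⟨hum, -, -, -, -, -, hweak⟩ := hu
  have hpos : ∀ᵐ p ∂μST, 0 < p.1 :=
    Measure.quasiMeasurePreserving_fst.ae (ae_restrict_mem measurableSet_Ioi)
  rw [← enorm_neg, ← hweak φ hφ]
  refine (enorm_integral_le_lintegral_enorm _).trans ?_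
  have hm : AEMeasurable (fun p : ℝ × E3 => ‖u p.1 p.2‖ₑ) (μST.restrict S) := hum.enorm.restrict
  rw [← lintegral_const_mul'' _ hm, ← lintegral_const_mul'' _ (hm.pow_const 2),
    ← lintegral_add_left' (hm.const_mul _), ← lintegral_indicator hS]
  refine lintegral_mono_ae ?_
  filter_upwards [hpos] with p hp
  by_cases hpS : p ∈ S
  · rw [indicator_of_mem hpS]
    have hx (i : Fin 3) : |u p.1 p.2 i| ≤ ‖u p.1 p.2‖ := PiLp.norm_apply_le (u p.1 p.2) i
    have h1 (i : Fin 3) : |u p.1 p.2 i * (timeDeriv φ p i + ν * spaceLap φ p i)| ≤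
        ‖u p.1 p.2‖ * (a * (1 + ν)) := by
      rw [abs_mul]
      refine mul_le_mul (hx i) ?_ (abs_nonneg _) (norm_nonneg _)
      refine (abs_add_le _ _).trans ?_
      rw [abs_mul, abs_of_pos hν]
      nlinarith [ht p i, hl p i]
    have h2 (i j : Fin 3) : |u p.1 p.2 i * u p.1 p.2 j * spaceGrad φ p i j| ≤
        ‖u p.1 p.2‖ ^ 2 * b := by
      rw [abs_mul, abs_mul, sq]
      exact mul_le_mul (mul_le_mul (hx i) (hx j) (abs_nonneg _) (norm_nonneg _)) (hg p i j)
        (abs_nonneg _) (by positivity)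
    have h3 : |(∑ i, u p.1 p.2 i * (timeDeriv φ p i + ν * spaceLap φ p i)) +
         ∑ i, ∑ j, u p.1 p.2 i * u p.1 p.2 j * spaceGrad φ p i j| ≤
        3 * (a * (1 + ν)) * ‖u p.1 p.2‖ + 9 * b * ‖u p.1 p.2‖ ^ 2 := by
      refine (abs_add_le _ _).trans (add_le_add ?_ ?_)
      · refine (Finset.abs_sum_le_sum_abs _ _).trans
          ((Finset.sum_le_sum fun i _ => h1 i).trans_eq ?_)
        simp; ring
      · refine (Finset.abs_sum_le_sum_abs _ _).trans
          ((Finset.sum_le_sum fun i _ => (Finset.abs_sum_le_sum_abs _ _).trans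
            (Finset.sum_le_sum fun j _ => h2 i j)).trans_eq ?_)
        simp; ring
    rw [Real.enorm_eq_ofReal_abs, ← ofReal_norm, ← ENNReal.ofReal_pow (norm_nonneg _),
      ← ENNReal.ofReal_mul (by positivity), ← ENNReal.ofReal_mul (by positivity),
      ← ENNReal.ofReal_add (by positivity) (by positivity)]
    exact ENNReal.ofReal_le_ofReal h3
  · obtain ⟨z1, z2, z3⟩ := hφS p hp hpS
    simp [z1, z2, z3]

lemma exists_decay_exponent {r s : ℝ≥0∞} (h : 5 / (3 * r) + 2 / s < 1) :
    ∃ κ : ℝ, 3 / 2 < κ ∧ (κ + 1) * (1 / r.toReal) - 3 * (1 - 1 / s.toReal) ≤ -κ := by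
  have h1 : 5 / (3 * r) ≠ ∞ := ((le_self_add.trans_lt h).trans_le le_top).ne
  have h2 : 2 / s ≠ ∞ := ((le_add_self.trans_lt h).trans_le le_top).ne
  have h3 := (ENNReal.toReal_lt_toReal (ENNReal.add_ne_top.2 ⟨h1, h2⟩) (by simp)).2 h
  rw [ENNReal.toReal_add h1 h2] at h3
  simp only [ENNReal.toReal_div, ENNReal.toReal_mul, ENNReal.toReal_ofNat, ENNReal.toReal_one] at h3
  have hx : 0 ≤ 1 / r.toReal := by positivity
  rw [show 5 / (3 * r.toReal) = 5 / 3 * (1 / r.toReal) by rw [div_mul_div_comm, mul_one],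
    show 2 / s.toReal = 2 * (1 / s.toReal) by ring] at h3
  set x := 1 / r.toReal
  set y := 1 / s.toReal
  refine ⟨(3 - 3 * y - x) / (1 + x), ?_, ?_⟩
  · rw [lt_div_iff₀ (by positivity)]; linarith
  · have : (3 - 3 * y - x) / (1 + x) * (1 + x) = 3 - 3 * y - x := by field_simp
    linarith

lemma exists_decay_of_mixedNorm_lt_top {ψ : E3 → E3} {C : ℝ} (hC : 0 ≤ C)
    (hψ : ∀ c d : ℝ, 1 ≤ c → c ^ 2 ≤ d → ∃ φ : ℝ × E3 → E3, IsTest φ ∧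
      (∀ x, φ (0, x) = ψ (c • x)) ∧
      (∀ p i, |timeDeriv φ p i| ≤ C * d) ∧ (∀ p i, |spaceLap φ p i| ≤ C * d) ∧
      (∀ p i j, |spaceGrad φ p i j| ≤ C * c) ∧
      ∀ p : ℝ × E3, 0 < p.1 → p ∉ Ioo 0 d⁻¹ ×ˢ Metric.ball (0 : E3) c⁻¹ →
        (∀ i, timeDeriv φ p i = 0) ∧ (∀ i, spaceLap φ p i = 0) ∧ ∀ i j, spaceGrad φ p i j = 0)
    {r s : ℝ≥0∞} (hr : 1 ≤ r) (hs : 1 ≤ s) {κ : ℝ} (hκ : 3 / 2 < κ)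
    (hκrs : (κ + 1) * (1 / r.toReal) - 3 * (1 - 1 / s.toReal) ≤ -κ)
    {ν : ℝ} (hν : 0 < ν) {u₀ : E3 → E3} {u : ℝ → E3 → E3}
    {G : ℝ → E3 → Fin 3 → Fin 3 → ℝ} (hu : IsWeakNS ν u₀ u G) {T : ℝ} (hT : 0 < T)
    (hN : mixedNorm r s (Ioo 0 T) u < ∞) :
    ∃ K : ℝ, ∀ c : ℝ, 1 ≤ c → T⁻¹ ≤ c →
      |∫ x : E3, ∑ i, u₀ x i * ψ (c • x) i| ≤ K * c ^ (-κ) := by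
  set N := mixedNorm r s (Ioo 0 T) u
  have hM : mixedNorm ∞ 2 (Ioi 0) u < ∞ := hu.2.1
  set M := mixedNorm ∞ 2 (Ioi 0) u
  set y := 1 - 1 / s.toReal
  have hy : 0 ≤ y := by
    by_cases hst : s = ∞
    · simp [y, hst]
    · rw [sub_nonneg, div_le_one (ENNReal.toReal_pos (zero_lt_one.trans_le hs).ne' hst)]
      simpa using (ENNReal.toReal_le_toReal (by simp) hst).2 hs
  set V : ℝ≥0∞ := volume (Metric.ball (0 : E3) 1) ^ y
  have hV : V ≠ ∞ := ENNReal.rpow_ne_top_of_nonneg hy measure_ball_lt_top.ne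
  set L : ℝ≥0∞ := ENNReal.ofReal (3 * (C * (1 + ν))) * (N * V) + ENNReal.ofReal (9 * C) * M ^ 2
  have hL : L ≠ ∞ := by
    have := hN.ne
    have := hM.ne
    finiteness
  refine ⟨L.toReal, fun c hc hcT => ?_⟩
  have hc0 : 0 < c := by linarith
  set d := c ^ (κ + 1)
  have hd0 : 0 < d := by positivity
  have hd2 : c ^ 2 ≤ d := by
    rw [← Real.rpow_natCast]
    exact Real.rpow_le_rpow_of_exponent_le hc (by norm_num; linarith)
  have hdT : d⁻¹ ≤ T := by
    rw [inv_le_comm₀ hd0 hT]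
    nlinarith
  obtain ⟨φ, hφ, hφ0, ht, hl, hg, hφS⟩ := hψ c d hc hd2
  have key := enorm_pairing_le hν hu hφ (by positivity) (by positivity) ht hl hg
    (measurableSet_Ioo.prod measurableSet_ball) hφS
  have hB : volume (Metric.ball (0 : E3) c⁻¹) ^ y = ENNReal.ofReal (c ^ (-3 * y)) * V := by
    rw [Measure.addHaar_ball _ _ (by positivity), ENNReal.mul_rpow_of_nonneg _ _ hy,
      ENNReal.ofReal_rpow_of_nonneg (by positivity) hy]
    congr 2
    rw [← Real.rpow_natCast, ← Real.rpow_mul (by positivity), Real.inv_rpow hc0.le,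
      ← Real.rpow_neg hc0.le]
    simp
  have hτ : ENNReal.ofReal d⁻¹ ^ (1 - 1 / r.toReal) =
      ENNReal.ofReal (c ^ ((κ + 1) * (1 / r.toReal) - (κ + 1))) := by
    rw [ENNReal.ofReal_rpow_of_pos (by positivity), Real.inv_rpow hd0.le, ← Real.rpow_neg hd0.le,
      ← Real.rpow_mul hc0.le]
    ring_nf
  have hX₁ := lintegral_enorm_le_mixedNorm hr hs hu.1 hdT
    (B := Metric.ball (0 : E3) c⁻¹) measure_ball_lt_top.ne
  have hX₂ := lintegral_enorm_sq_le_mixedNorm hu.1 d⁻¹ (Metric.ball (0 : E3) c⁻¹)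
  rw [hB, hτ] at hX₁
  have e₁ : d * c ^ (-3 * y) * c ^ ((κ + 1) * (1 / r.toReal) - (κ + 1)) ≤ c ^ (-κ) := by
    rw [← Real.rpow_add hc0, ← Real.rpow_add hc0]
    exact Real.rpow_le_rpow_of_exponent_le hc (by linarith)
  have e₂ : c * d⁻¹ = c ^ (-κ) := by
    rw [← Real.rpow_neg hc0.le]
    nth_rw 1 [← Real.rpow_one c]
    rw [← Real.rpow_add hc0]
    ring_nf
  simp only [hφ0] at key
  have fin : ‖∫ x : E3, ∑ i, u₀ x i * ψ (c • x) i‖ₑ ≤ L * ENNReal.ofReal (c ^ (-κ)) := by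
    refine key.trans ?_
    rw [add_mul]
    refine add_le_add ?_ ?_
    · calc _ ≤ ENNReal.ofReal (3 * (C * d * (1 + ν))) * (N * (ENNReal.ofReal (c ^ (-3 * y)) * V) *
            ENNReal.ofReal (c ^ ((κ + 1) * (1 / r.toReal) - (κ + 1)))) := by gcongr
        _ = ENNReal.ofReal (3 * (C * (1 + ν))) * (N * V) * ENNReal.ofReal
            (d * c ^ (-3 * y) * c ^ ((κ + 1) * (1 / r.toReal) - (κ + 1))) := by
          rw [ENNReal.ofReal_mul (p := d * c ^ (-3 * y)) (by positivity),
            ENNReal.ofReal_mul (p := d) (by positivity),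
            show 3 * (C * d * (1 + ν)) = 3 * (C * (1 + ν)) * d by ring,
            ENNReal.ofReal_mul (q := d) (by positivity)]
          ring
        _ ≤ _ := by gcongr
    · calc _ ≤ ENNReal.ofReal (9 * (C * c)) * (M ^ 2 * ENNReal.ofReal d⁻¹) := by gcongr
        _ = _ := by
          rw [← e₂, ENNReal.ofReal_mul (p := c) hc0.le, ← mul_assoc 9 C c,
            ENNReal.ofReal_mul (q := c) (by positivity)]
          ring
  rw [Real.enorm_eq_ofReal_abs, ← ENNReal.ofReal_toReal hL,
    ← ENNReal.ofReal_mul ENNReal.toReal_nonneg] at fin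
  exact (ENNReal.ofReal_le_ofReal_iff (by positivity)).1 fin

lemma isNowhereDense_inner_decay {H : Type*} [NormedAddCommGroup H] [InnerProductSpace ℝ H]
    {S : Set H} {e : ℕ → H} (he : ∀ n, e n ≠ 0) (hS : ∀ v ∈ S, ∀ n, ∀ a : ℝ, v + a • e n ∈ S)
    {b : ℕ → ℝ} (hb : Tendsto (fun n => b n / ‖e n‖) atTop (nhds 0)) (K : ℕ) :
    IsNowhereDense {v : S | ∀ n, K ≤ n → |inner ℝ (e n) (v : H)| ≤ b n} := by
  have hcl : IsClosed {v : S | ∀ n, K ≤ n → |inner ℝ (e n) (v : H)| ≤ b n} := by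
    simp only [ofPred_forall]
    exact isClosed_iInter fun n => isClosed_iInter fun _ =>
      isClosed_le (by fun_prop) continuous_const
  rw [hcl.isNowhereDense_iff, eq_empty_iff_forall_notMem]
  intro x hx
  obtain ⟨ε, hε, hball⟩ := Metric.isOpen_iff.1 isOpen_interior x hx
  have hsmall := hb.eventually (gt_mem_nhds (show (0 : ℝ) < ε / 4 by positivity))
  obtain ⟨n, hn, hnK⟩ := (hsmall.and (eventually_ge_atTop K)).exists
  have hpos : 0 < ‖e n‖ := norm_pos_iff.2 (he n)
  let z : S := ⟨x + (ε / (2 * ‖e n‖)) • e n, hS x x.2 n _⟩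
  have hz : z ∈ Metric.ball x ε := by
    rw [Metric.mem_ball, Subtype.dist_eq, dist_eq_norm, add_sub_cancel_left, norm_smul,
      Real.norm_of_nonneg (by positivity), div_mul_eq_mul_div, mul_div_mul_right _ _ hpos.ne']
    linarith
  have h1 := (interior_subset (hball hz)) n hnK
  have h2 := (interior_subset hx) n hnK
  have h3 : inner ℝ (e n) (z : H) = inner ℝ (e n) (x : H) + ε / 2 * ‖e n‖ := by
    simp only [z, inner_add_right, inner_smul_right, real_inner_self_eq_norm_sq]
    field_simp
  rw [h3] at h1
  rw [div_lt_iff₀ hpos] at hn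
  have := abs_le.1 h1
  have := abs_le.1 h2
  linarith

lemma integrable_mul_pd {v : E3 → E3} (hv : MemLp v 2 volume) {φ : E3 → ℝ}
    (hφ : ContDiff ℝ (⊤ : ℕ∞) φ) (hc : HasCompactSupport φ) (i : Fin 3) :
    Integrable (fun x => v x i * pd φ i x) := by
  have h1 : MemLp (fun x => v x i) 2 volume :=
    hv.of_le ((EuclideanSpace.proj (𝕜 := ℝ) i).continuous.comp_aestronglyMeasurable hv.1)
      (.of_forall fun x => PiLp.norm_apply_le (v x) i)
  have h2 : MemLp (pd φ i) 2 volume :=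
    (contDiff_pd hφ i).continuous.memLp_of_hasCompactSupport
      (hc.mono' ((subset_tsupport _).trans (tsupport_pd_subset φ i)))
  exact h1.integrable_mul h2

lemma IsDivFree.congr_ae {v w : E3 → E3} (hv : IsDivFree v) (h : v =ᵐ[volume] w) :
    IsDivFree w := by
  intro φ hφ hc
  rw [← hv φ hφ hc]
  refine integral_congr_ae ?_
  filter_upwards [h] with x hx
  rw [hx]

lemma IsDivFree.add_smul {v w : E3 → E3} (hv : IsDivFree v) (hw : IsDivFree w)
    (hv2 : MemLp v 2 volume) (hw2 : MemLp w 2 volume) (a : ℝ) : IsDivFree (v + a • w) := by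
  intro φ hφ hc
  have e : ∀ x, ∑ i, (v + a • w) x i * pd φ i x =
      ∑ i, v x i * pd φ i x + a * ∑ i, w x i * pd φ i x := by
    intro x
    rw [Finset.mul_sum, ← Finset.sum_add_distrib]
    refine Finset.sum_congr rfl fun i _ => ?_
    simp; ring
  simp only [e]
  rw [integral_add, integral_const_mul, hv φ hφ hc, hw φ hφ hc]
  · simp
  · exact integrable_finsetSum _ fun i _ => integrable_mul_pd hv2 hφ hc i
  · exact (integrable_finsetSum _ fun i _ => integrable_mul_pd hw2 hφ hc i).const_mul a

lemma isDivFree_of_contDiff {f : E3 → E3} (hf : ContDiff ℝ (⊤ : ℕ∞) f)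
    (hd : ∀ x, ∑ i, pd (fun y => f y i) i x = 0) : IsDivFree f := by
  intro φ hφ hc
  have hfi (i : Fin 3) : ContDiff ℝ (⊤ : ℕ∞) fun y => f y i := contDiff_euclidean.1 hf i
  have hci (i : Fin 3) : HasCompactSupport (pd φ i) :=
    hc.mono' ((subset_tsupport _).trans (tsupport_pd_subset φ i))
  have i1 (i : Fin 3) : Integrable (fun x => f x i * pd φ i x) :=
    ((hfi i).continuous.mul (contDiff_pd hφ i).continuous).integrable_of_hasCompactSupport
      (hci i).mul_left
  have i2 (i : Fin 3) : Integrable (fun x => pd (fun y => f y i) i x * φ x) :=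
    ((contDiff_pd (hfi i) i).continuous.mul hφ.continuous).integrable_of_hasCompactSupport
      hc.mul_left
  have i3 (i : Fin 3) : Integrable (fun x => f x i * φ x) :=
    ((hfi i).continuous.mul hφ.continuous).integrable_of_hasCompactSupport hc.mul_left
  have parts (i : Fin 3) : ∫ x, f x i * pd φ i x = - ∫ x, pd (fun y => f y i) i x * φ x :=
    integral_mul_fderiv_eq_neg_fderiv_mul_of_integrable (i2 i) (i1 i) (i3 i)
      (fun x _ => (hfi i).differentiable (by simp) x) (fun x _ => hφ.differentiable (by simp) x)
  rw [integral_finsetSum _ fun i _ => i1 i]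
  simp only [parts, Finset.sum_neg_distrib]
  rw [← integral_finsetSum _ fun i _ => i2 i]
  simp [← Finset.sum_mul, hd]

/-- If `5/(3r) + 2/s < 1` then, for a Baire-generic datum in `L²_σ`, no weak solution
belongs to `L^r(0,T;L^s)` for any `T > 0`. -/
theorem stmt_6 (r s : ℝ≥0∞) (hr : 4/3 < r) (hs : 4/3 < s) (ν₀ : ℝ) (hν₀ : 0 < ν₀)
    (h : 5/(3*r) + 2/s < 1) :
    IsMeagre {u₀ : L2σ | ∃ T : ℝ, 0 < T ∧ ∃ u G,
      IsWeakNS ν₀ ((u₀ : Lp E3 2 (volume : Measure E3)) : E3 → E3) u G ∧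
      mixedNorm r s (Ioo 0 T) u < ∞} := by
  obtain ⟨ψ, hψ, hψc, hψd, hψ0, C, hC, htest⟩ := exists_scaled_tests
  obtain ⟨κ, hκ, hκrs⟩ := exists_decay_exponent h
  have h43 : (1 : ℝ≥0∞) ≤ 4 / 3 := by
    rw [ENNReal.le_div_iff_mul_le (by simp) (by simp)]; norm_num
  have hr1 : 1 ≤ r := h43.trans hr.le
  have hs1 : 1 ≤ s := h43.trans hs.le
  let c : ℕ → ℝ := fun n => n + 1
  have hc1 (n : ℕ) : 1 ≤ c n := by simp [c]
  have hc0 (n : ℕ) : 0 < c n := zero_lt_one.trans_le (hc1 n)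
  have hsm (n : ℕ) : ContDiff ℝ (⊤ : ℕ∞) fun x => ψ (c n • x) :=
    hψ.comp (contDiff_id.const_smul (c n))
  have hcs (n : ℕ) : HasCompactSupport fun x => ψ (c n • x) := hψc.comp_smul (hc0 n).ne'
  have hmem (n : ℕ) : MemLp (fun x => ψ (c n • x)) 2 (volume : Measure E3) :=
    (hsm n).continuous.memLp_of_hasCompactSupport (hcs n)
  let e : ℕ → Lp E3 2 (volume : Measure E3) := fun n => (hmem n).toLp
  have hinner (n : ℕ) (v : Lp E3 2 (volume : Measure E3)) :
      inner ℝ (e n) v = ∫ x, ∑ i, v x i * ψ (c n • x) i := by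
    rw [L2.inner_def]
    refine integral_congr_ae ?_
    filter_upwards [(hmem n).coeFn_toLp] with x hx
    rw [hx, PiLp.inner_apply]
    simp
  have hcont2 : Continuous fun x => ‖ψ x‖ ^ 2 := hψ.continuous.norm.pow 2
  set m : ℝ := ∫ x, ‖ψ x‖ ^ 2
  have hm : 0 < m := by
    obtain ⟨x, hx⟩ := Function.ne_iff.1 hψ0
    refine hcont2.integral_pos_of_hasCompactSupport_nonneg_nonzero ?_ (fun x => by positivity)
      (x := x) ?_
    · exact hψc.mono fun x hx hx' => hx (by simp [hx'])
    · simpa using hx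
  have hnorm (n : ℕ) : ‖e n‖ = √m * c n ^ (-(3 / 2) : ℝ) := by
    have h1 : ‖e n‖ ^ 2 = (c n ^ 3)⁻¹ * m := by
      rw [← real_inner_self_eq_norm_sq, L2.inner_def]
      have : ∫ x, inner ℝ (e n x) (e n x) = ∫ x, ‖ψ (c n • x)‖ ^ 2 := by
        refine integral_congr_ae ?_
        filter_upwards [(hmem n).coeFn_toLp] with x hx
        rw [hx, real_inner_self_eq_norm_sq]
      rw [this, Measure.integral_comp_smul volume (fun x => ‖ψ x‖ ^ 2)]
      simp [m, abs_of_pos (hc0 n)]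
    have h2 : (√m * c n ^ (-(3 / 2) : ℝ)) ^ 2 = (c n ^ 3)⁻¹ * m := by
      rw [mul_pow, Real.sq_sqrt hm.le, ← Real.rpow_natCast (c n ^ (-(3 / 2) : ℝ)),
        ← Real.rpow_mul (hc0 n).le, ← Real.rpow_natCast, ← Real.rpow_neg (hc0 n).le, mul_comm]
      norm_num
    have := hc0 n
    exact (sq_eq_sq₀ (norm_nonneg _) (by positivity)).1 (h1.trans h2.symm)
  have he0 (n : ℕ) : e n ≠ 0 := by
    have := hc0 n
    rw [← norm_pos_iff, hnorm]
    positivity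
  have hediv (n : ℕ) : IsDivFree (e n) := by
    refine (isDivFree_of_contDiff (hsm n) fun x => ?_).congr_ae (hmem n).coeFn_toLp.symm
    have : ∀ i, pd (fun y => ψ (c n • y) i) i x = c n * pd (fun y => ψ y i) i (c n • x) :=
      fun i => pd_comp_smul (fun y => ψ y i) _ _ _
    simp only [this, ← Finset.mul_sum, hψd, mul_zero]
  have hS : ∀ v ∈ L2σ, ∀ n, ∀ a : ℝ, v + a • e n ∈ L2σ := by
    intro v hv n a
    refine (IsDivFree.add_smul hv (hediv n) (Lp.memLp v) (Lp.memLp (e n)) a).congr_ae ?_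
    filter_upwards [Lp.coeFn_add v (a • e n), Lp.coeFn_smul a (e n)] with x h1 h2
    rw [h1, Pi.add_apply, Pi.add_apply, h2]
  have hctop : Tendsto c atTop atTop :=
    tendsto_atTop_add_const_right _ _ tendsto_natCast_atTop_atTop
  have hlim (K : ℕ) : Tendsto (fun n => K * c n ^ (-κ) / ‖e n‖) atTop (nhds 0) := by
    have h1 := ((tendsto_rpow_neg_atTop (show 0 < κ - 3 / 2 by linarith)).comp hctop).const_mul
      (K / √m)
    rw [mul_zero] at h1
    refine h1.congr fun n => ?_
    have := hc0 n
    rw [hnorm, mul_div_mul_comm, ← Real.rpow_sub (hc0 n)]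
    simp only [Function.comp]
    ring_nf
  refine (isMeagre_iUnion fun K : ℕ => (isNowhereDense_inner_decay he0 hS (hlim K) K).isMeagre).mono
    fun u₀ hu₀ => ?_
  obtain ⟨T, hT, u, G, hu, hN⟩ := hu₀
  obtain ⟨K₀, hK₀⟩ := exists_decay_of_mixedNorm_lt_top hC htest hr1 hs1 hκ hκrs hν₀ hu hT hN
  obtain ⟨K, hK⟩ := exists_nat_ge (max K₀ T⁻¹)
  refine mem_iUnion.2 ⟨K, fun n hn => ?_⟩
  rw [hinner]
  have hcn := hc0 n
  refine (hK₀ (c n) (hc1 n) ?_).trans ?_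
  · have : (K : ℝ) ≤ n := by exact_mod_cast hn
    have := le_max_right K₀ T⁻¹
    simp only [c]; linarith
  · gcongr
    exact (le_max_left _ _).trans hK
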